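/- Let Q be a commutative Moufang loop and let α, β be automorphisms of Q with x+α(x) ∈ Z(Q) and x+β(x) ∈ Z(Q) for all x (i.e., α and β are J-central). Then: (i) x - (α(x)+β(x)) ∈ Z(Q) for every x ∈ Q; and (ii) for every automorphism γ of Q commuting with both α and β, and for all u, v ∈ Z(Q), if u = v + (x - (α(x)+β(x))) for some x ∈ Q, then γ(u) = γ(v) + (y - (α(y)+β(y))) for some y ∈ Q. -/

import Mathlib

/-- A loop: a quasigroup with a two-sided neutral element. -/
structure Loop (Q : Type) where
  add : Q → Q → Q
  zero : Q
  addLeftBij : ∀ x, Function.Bijective fun y => add x y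
  addRightBij : ∀ x, Function.Bijective fun y => add y x
  zero_add : ∀ x, add zero x = x
  add_zero : ∀ x, add x zero = x

namespace Loop

/-- The center of a loop: elements commuting and associating with everything. -/
def center {Q : Type} (L : Loop Q) : Set Q :=
  {z | (∀ x, L.add z x = L.add x z) ∧
       (∀ x y, L.add z (L.add x y) = L.add (L.add z x) y) ∧
       (∀ x y, L.add x (L.add z y) = L.add (L.add x z) y) ∧
       (∀ x y, L.add x (L.add y z) = L.add (L.add x y) z)}

/-- A map `α` is central if `Z(Q) + α(x) = Z(Q) + x` for every `x`. -/
def IsCentral {Q : Type} (L : Loop Q) (α : Q → Q) : Prop :=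
  ∀ x, (fun z => L.add z (α x)) '' L.center = (fun z => L.add z x) '' L.center

/-- Automorphism of a loop: a bijective map respecting the operation. -/
def IsAut {Q : Type} (L : Loop Q) (f : Q → Q) : Prop :=
  Function.Bijective f ∧ ∀ x y, f (L.add x y) = L.add (f x) (f y)

/-- `neg` provides two-sided inverses for the loop. -/
def IsTwoSidedInv {Q : Type} (L : Loop Q) (neg : Q → Q) : Prop :=
  ∀ x, L.add x (neg x) = L.zero ∧ L.add (neg x) x = L.zero

/-- Commutative Moufang loop: commutative and satisfying the Moufang identity. -/
def IsCommMoufang {Q : Type} (L : Loop Q) : Prop :=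
  (∀ x y, L.add x y = L.add y x) ∧
  (∀ x y z, L.add x (L.add y (L.add x z)) = L.add (L.add (L.add x y) x) z)

end Loop

/-!
Modulo its center, a commutative Moufang loop has exponent 3: translating three times by `x`
commutes with right translations, so `x + (x + x)` is central.

If `x + a` and `x + b` are central, so is `c = (x + a) + (x + b) = (x + x) + (a + b)`, and adding
`c` to `x - (a + b)` gives the central element `x + (x + x)`. Hence `x - (a + b)` is itself central.
-/

namespace Loop

variable {Q Q' : Type} {L : Loop Q} {M : Loop Q'}

local infixl:65 " ∔ " => Loop.add L

theorem add_right_inj {a b c : Q} : a ∔ b = a ∔ c ↔ b = c :=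
  (L.addLeftBij a).injective.eq_iff

theorem add_left_inj {a b c : Q} : b ∔ a = c ∔ a ↔ b = c :=
  (L.addRightBij a).injective.eq_iff

theorem exists_add_eq_zero (L : Loop Q) (a : Q) : ∃ b, L.add a b = L.zero :=
  (L.addLeftBij a).surjective L.zero

theorem IsTwoSidedInv.eq_neg_of_add_eq_zero {neg : Q → Q} (hneg : L.IsTwoSidedInv neg) {a b : Q}
    (hab : a ∔ b = L.zero) : b = neg a :=
  add_right_inj.mp (hab.trans (hneg a).1.symm)

theorem map_zero_of_map_add {f : Q → Q'} (hf : ∀ x y, f (x ∔ y) = M.add (f x) (f y)) :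
    f L.zero = M.zero :=
  add_right_inj.mp <| calc
    M.add (f L.zero) (f L.zero) = f L.zero := by rw [← hf, L.add_zero]
    _ = M.add (f L.zero) M.zero := (M.add_zero _).symm

theorem map_neg_of_map_add {f : Q → Q'} (hf : ∀ x y, f (x ∔ y) = M.add (f x) (f y))
    {neg : Q → Q} (hneg : L.IsTwoSidedInv neg) {neg' : Q' → Q'} (hneg' : M.IsTwoSidedInv neg')
    (x : Q) : f (neg x) = neg' (f x) :=
  hneg'.eq_neg_of_add_eq_zero (by rw [← hf, (hneg x).1, map_zero_of_map_add hf])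

theorem add_right_comm_of_mem_center {b : Q} (hb : b ∈ L.center) (x y : Q) :
    x ∔ b ∔ y = x ∔ y ∔ b := by
  rw [← hb.2.2.1, hb.1, hb.2.2.2]

theorem add_mem_center_iff_left {a b : Q} (hb : b ∈ L.center) :
    a ∔ b ∈ L.center ↔ a ∈ L.center := by
  -- Moving `b` to the far right turns each condition on `a ∔ b` into the one on `a`, plus `b`.
  simp only [center, Set.mem_ofPred_eq, hb.2.2.2, add_right_comm_of_mem_center hb, add_left_inj]

theorem mem_center_of_comm_of_assoc (hcomm : ∀ x y, x ∔ y = y ∔ x) {z : Q}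
    (hz : ∀ x y, z ∔ (x ∔ y) = z ∔ x ∔ y) : z ∈ L.center := by
  refine ⟨hcomm z, hz, fun x y => ?_, fun x y => ?_⟩
  · rw [hcomm x (z ∔ y), hcomm x z, ← hz, ← hz, hcomm x y]
  · rw [hcomm y z, hcomm x (z ∔ y), ← hz, hcomm (x ∔ y) z, hcomm x y]

namespace IsCommMoufang

theorem add_self_add (h : L.IsCommMoufang) (x y : Q) : x ∔ x ∔ y = x ∔ (x ∔ y) := by
  simpa only [L.zero_add, L.add_zero] using (h.2 x L.zero y).symm

theorem add_add_add_left (h : L.IsCommMoufang) (x y z : Q) :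
    x ∔ (y ∔ (x ∔ z)) = x ∔ x ∔ y ∔ z := by
  rw [h.2, h.1 (x ∔ y) x, h.add_self_add]

theorem add_add_cancel_of_add_eq_zero (h : L.IsCommMoufang) {a b : Q} (hab : a ∔ b = L.zero)
    (x : Q) : a ∔ (b ∔ x) = x :=
  add_right_inj.mp <| calc
    b ∔ (a ∔ (b ∔ x)) = b ∔ a ∔ b ∔ x := h.2 b a x
    _ = b ∔ x := by rw [h.1 b a, hab, L.zero_add]

theorem add_add_add_eq_zero (h : L.IsCommMoufang) {a a' b b' : Q} (ha : a ∔ a' = L.zero)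
    (hb : b ∔ b' = L.zero) : a ∔ b ∔ (a' ∔ b') = L.zero := by
  obtain ⟨c, hc⟩ := L.exists_add_eq_zero (a ∔ b)
  have ha' : a' ∔ a = L.zero := (h.1 a' a).trans ha
  have hb' : b' ∔ b = L.zero := (h.1 b' b).trans hb
  have hc' : c ∔ (a ∔ b) = L.zero := (h.1 c _).trans hc
  have hbc : b ∔ c = a' := calc
    b ∔ c = c ∔ (a ∔ b ∔ a') := by
      rw [h.1 (a ∔ b) a', h.add_add_cancel_of_add_eq_zero ha', h.1]
    _ = a' := h.add_add_cancel_of_add_eq_zero hc' a'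
  have hc_eq : c = a' ∔ b' := by
    rw [h.1, ← hbc, h.add_add_cancel_of_add_eq_zero hb']
  rw [← hc_eq, hc]

theorem add_self_add_add (h : L.IsCommMoufang) (x u v : Q) :
    x ∔ x ∔ (u ∔ v) = x ∔ u ∔ (x ∔ v) := by
  obtain ⟨x', hx⟩ := L.exists_add_eq_zero x
  obtain ⟨v', hv⟩ := L.exists_add_eq_zero v
  have hv' : v' ∔ v = L.zero := (h.1 v' v).trans hv
  have hxu : x ∔ u = x' ∔ v' ∔ (x ∔ x ∔ (u ∔ v)) := calc
    x ∔ u = x ∔ (u ∔ v ∔ (x ∔ (x' ∔ v'))) := by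
      rw [h.add_add_cancel_of_add_eq_zero hx, h.1 (u ∔ v), h.1 u v,
        h.add_add_cancel_of_add_eq_zero hv']
    _ = x' ∔ v' ∔ (x ∔ x ∔ (u ∔ v)) := by rw [h.add_add_add_left, h.1]
  rw [h.1 (x ∔ u), hxu, h.add_add_cancel_of_add_eq_zero (h.add_add_add_eq_zero hx hv)]

theorem add_add_self_mem_center (h : L.IsCommMoufang) (x : Q) : x ∔ (x ∔ x) ∈ L.center := by
  have add_thrice_add (u v : Q) : x ∔ (x ∔ (x ∔ (u ∔ v))) = x ∔ (x ∔ (x ∔ u)) ∔ v := by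
    rw [← h.add_self_add x (u ∔ v), h.add_self_add_add, h.add_add_add_left, h.add_self_add]
  have three_add (u : Q) : x ∔ (x ∔ x) ∔ u = x ∔ (x ∔ (x ∔ u)) := by
    simpa only [L.zero_add, L.add_zero] using (add_thrice_add L.zero u).symm
  refine mem_center_of_comm_of_assoc h.1 fun u v => ?_
  rw [three_add, three_add, add_thrice_add]

theorem add_neg_add_mem_center (h : L.IsCommMoufang) {neg : Q → Q} (hneg : L.IsTwoSidedInv neg)
    {x a b : Q} (ha : x ∔ a ∈ L.center) (hb : x ∔ b ∈ L.center) :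
    x ∔ neg (a ∔ b) ∈ L.center := by
  have hc : a ∔ b ∔ (x ∔ x) ∈ L.center := by
    rw [h.1, h.add_self_add_add, add_mem_center_iff_left hb]
    exact ha
  have h_three : x ∔ neg (a ∔ b) ∔ (a ∔ b ∔ (x ∔ x)) = x ∔ (x ∔ x) := by
    rw [← hc.2.2.2, h.add_add_cancel_of_add_eq_zero (hneg (a ∔ b)).2]
  rw [← add_mem_center_iff_left hc, h_three]
  exact h.add_add_self_mem_center x

end IsCommMoufang

end Loop

theorem stmt_general {Q : Type} (L : Loop Q) (h : L.IsCommMoufang)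
    (neg : Q → Q) (hneg : L.IsTwoSidedInv neg) (α β : Q → Q)
    (hαc : ∀ x, L.add x (α x) ∈ L.center) (hβc : ∀ x, L.add x (β x) ∈ L.center) :
    (∀ x, L.add x (neg (L.add (α x) (β x))) ∈ L.center) ∧
    (∀ γ : Q → Q, (∀ x y, γ (L.add x y) = L.add (γ x) (γ y)) →
      (∀ x, γ (α x) = α (γ x)) → (∀ x, γ (β x) = β (γ x)) →
      ∀ u v, (∃ x, u = L.add v (L.add x (neg (L.add (α x) (β x))))) →
        ∃ y, γ u = L.add (γ v) (L.add y (neg (L.add (α y) (β y))))) := by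
  refine ⟨fun x => h.add_neg_add_mem_center hneg (hαc x) (hβc x), ?_⟩
  rintro γ hγ hγα hγβ _ v ⟨x, rfl⟩
  exact ⟨γ x, by rw [hγ, hγ, Loop.map_neg_of_map_add hγ hneg hneg, hγ, hγα, hγβ]⟩

open Loop in
/-- For J-central automorphisms `α`, `β` of a commutative Moufang loop,
`x - (α(x)+β(x))` is central, and automorphisms commuting with `α` and `β`
act on the center modulo the image of `id - (α+β)`. -/
theorem stmt {Q : Type} (L : Loop Q) (h : L.IsCommMoufang)
    (neg : Q → Q) (hneg : L.IsTwoSidedInv neg)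
    (α β : Q → Q) (hα : L.IsAut α) (hβ : L.IsAut β)
    (hαc : ∀ x, L.add x (α x) ∈ L.center)
    (hβc : ∀ x, L.add x (β x) ∈ L.center) :
    (∀ x, L.add x (neg (L.add (α x) (β x))) ∈ L.center) ∧
    (∀ γ : Q → Q, L.IsAut γ → (∀ x, γ (α x) = α (γ x)) →
      (∀ x, γ (β x) = β (γ x)) →
      ∀ u ∈ L.center, ∀ v ∈ L.center,
        (∃ x, u = L.add v (L.add x (neg (L.add (α x) (β x))))) →
        ∃ y, γ u = L.add (γ v) (L.add y (neg (L.add (α y) (β y))))) := by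
  have hgen := stmt_general L h neg hneg α β hαc hβc
  exact ⟨hgen.1, fun γ hγ hγα hγβ u _ v _ => hgen.2 γ hγ.2 hγα hγβ u v⟩
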